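/- Let μ, μ_n ∈ M_O (n ≥ 1). For A ⊆ O define S(A) = {λx : x ∈ A, λ ≥ 1}, and let 𝒜_μ be the collection of Borel sets A ⊆ O that are bounded away from C, satisfy μ(∂A) = 0, and satisfy S(A) = A. If μ_n(A) → μ(A) for every A ∈ 𝒜_μ, then μ_n → μ in M_O. -/

import Mathlib

open MeasureTheory Metric Filter Topology Set ENNReal

noncomputable section

variable {S : Type*} [MetricSpace S] [MeasurableSpace S]

/-- `A` is bounded away from `C`: `A ⊆ S \ C^r` for some `r > 0`. -/
def BddAway (C A : Set S) : Prop := ∃ r > 0, ∀ x ∈ A, r ≤ infDist x C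

/-- The class `C_O` of test functions: bounded, nonnegative, continuous on `O = S \ C`,
and vanishing on `C^r` for some `r > 0` (extended by `0` to all of `S`). -/
def IsCO (C : Set S) (f : S → ℝ) : Prop :=
  ContinuousOn f Cᶜ ∧ (∀ x, 0 ≤ f x) ∧ (∃ B : ℝ, ∀ x, f x ≤ B) ∧
    ∃ r > 0, ∀ x, infDist x C < r → f x = 0

/-- The class `M_O`: Borel measures on `O = S \ C` (i.e. giving no mass to `C`)
that are finite on `S \ C^r` for each `r > 0`. -/
def MemMO (C : Set S) (μ : Measure S) : Prop :=
  μ C = 0 ∧ ∀ r : ℝ, 0 < r → μ {x | r ≤ infDist x C} < ⊤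

/-- Convergence `μ_n → μ` in `M_O`. -/
def MOTendsto (C : Set S) (μn : ℕ → Measure S) (μ : Measure S) : Prop :=
  ∀ f : S → ℝ, IsCO C f →
    Tendsto (fun n => ∫ x, f x ∂ μn n) atTop (𝓝 (∫ x, f x ∂ μ))

/-- Axioms (A1)–(A3) for a scalar multiplication `(0,∞) × S → S`, together with the
requirement that `C` be a cone. -/
def ScaleAxioms (C : Set S) (sm : ℝ → S → S) : Prop :=
  ContinuousOn (fun p : ℝ × S => sm p.1 p.2) (Set.Ioi (0:ℝ) ×ˢ Set.univ) ∧
  (∀ x, sm 1 x = x) ∧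
  (∀ l₁ l₂ : ℝ, 0 < l₁ → 0 < l₂ → ∀ x, sm l₁ (sm l₂ x) = sm (l₁ * l₂) x) ∧
  (∀ l : ℝ, 1 < l → ∀ x ∈ Cᶜ, infDist x C < infDist (sm l x) C) ∧
  (∀ x ∈ C, ∀ l : ℝ, 0 < l → sm l x ∈ C)

/-- `A` is stable under multiplication by scalars `l ≥ 1`. -/
def UpClosed (sm : ℝ → S → S) (A : Set S) : Prop := ∀ x ∈ A, ∀ l : ℝ, 1 ≤ l → sm l x ∈ A

/-- The class of Borel `μ`-continuity sets that are bounded away from `C` and stable under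
multiplication by scalars `l ≥ 1`. -/
def scaleClass (C : Set S) (sm : ℝ → S → S) (μ : Measure S) : Set (Set S) :=
  {A | MeasurableSet A ∧ BddAway C A ∧ μ (frontier A) = 0 ∧ UpClosed sm A}

lemma BddAway.subset_compl {X : Type*} [MetricSpace X] {C A : Set X}
    (hA : BddAway C A) : A ⊆ Cᶜ := by
  obtain ⟨r, hr, hA⟩ := hA
  intro x hx hxC
  have := hA x hx
  rw [infDist_zero_of_mem hxC] at this
  linarith

lemma inter_mem_scaleClass {C : Set S} {sm : ℝ → S → S} {μ : Measure S} {A B : Set S}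
    (hA : A ∈ scaleClass C sm μ) (hB : B ∈ scaleClass C sm μ) :
    A ∩ B ∈ scaleClass C sm μ := by
  obtain ⟨mA, ⟨r, hr, bA⟩, nA, uA⟩ := hA
  obtain ⟨mB, -, nB, uB⟩ := hB
  refine ⟨mA.inter mB, ⟨r, hr, fun x hx => bA x hx.1⟩, ?_,
    fun x hx l hl => ⟨uA x hx.1 l hl, uB x hx.2 l hl⟩⟩
  refine measure_mono_null (frontier_inter_subset A B) ?_
  exact measure_union_null (measure_mono_null inter_subset_left nA)
    (measure_mono_null inter_subset_right nB)

lemma measure_lt_top_of_mem_scaleClass {C : Set S} {sm : ℝ → S → S} {μ ν : Measure S}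
    {A : Set S} (hν : MemMO C ν) (hA : A ∈ scaleClass C sm μ) : ν A < ⊤ := by
  obtain ⟨-, ⟨r, hr, bA⟩, -, -⟩ := hA
  exact (measure_mono bA).trans_lt (hν.2 r hr)

namespace ScaleAxioms

variable {X : Type*} [MetricSpace X] {C : Set X} {sm : ℝ → X → X}

lemma setOf_smul_eq (hsm : ScaleAxioms C sm) {A : Set X} (hA : UpClosed sm A) :
    {y | ∃ x ∈ A, ∃ l : ℝ, 1 ≤ l ∧ y = sm l x} = A := by
  ext y
  constructor
  · rintro ⟨x, hx, l, hl, rfl⟩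
    exact hA x hx l hl
  · intro hy
    exact ⟨y, hy, 1, le_rfl, (hsm.2.1 y).symm⟩

lemma tendsto (hsm : ScaleAxioms C sm) {ι : Type*} {F : Filter ι} {c : ι → ℝ} {w : ι → X}
    {c₀ : ℝ} {w₀ : X} (hc₀ : 0 < c₀) (hc : Tendsto c F (𝓝 c₀)) (hw : Tendsto w F (𝓝 w₀)) :
    Tendsto (fun i => sm (c i) (w i)) F (𝓝 (sm c₀ w₀)) := by
  have hn : Ioi (0:ℝ) ×ˢ (univ : Set X) ∈ 𝓝 (c₀, w₀) :=
    (isOpen_Ioi.prod isOpen_univ).mem_nhds ⟨hc₀, mem_univ _⟩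
  exact (hsm.1.continuousAt hn).tendsto.comp (hc.prodMk_nhds hw)

lemma continuous (hsm : ScaleAxioms C sm) {c : ℝ} (hc : 0 < c) : Continuous (sm c) :=
  continuous_iff_continuousAt.2 fun _ => hsm.tendsto hc tendsto_const_nhds tendsto_id

lemma infDist_le (hsm : ScaleAxioms C sm) (x : X) {l : ℝ} (hl : 1 ≤ l) :
    infDist x C ≤ infDist (sm l x) C := by
  rcases hl.eq_or_lt with rfl | hl
  · rw [hsm.2.1]
  · by_cases hx : x ∈ C
    · rw [infDist_zero_of_mem hx]
      exact infDist_nonneg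
    · exact (hsm.2.2.2.1 l hl x hx).le

lemma smul_smul (hsm : ScaleAxioms C sm) {c l : ℝ} (hc : 0 < c) (hl : 0 < l) (x : X) :
    sm c (sm l x) = sm (c * l) x := hsm.2.2.1 c l hc hl x

lemma infDist_mono (hsm : ScaleAxioms C sm) (x : X) {c c' : ℝ} (hc : 0 < c) (h : c ≤ c') :
    infDist (sm c x) C ≤ infDist (sm c' x) C := by
  have := hsm.infDist_le (sm c x) ((one_le_div hc).2 h)
  rwa [hsm.smul_smul (div_pos (hc.trans_le h) hc) hc, div_mul_cancel₀ _ hc.ne'] at this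

lemma infDist_lt (hsm : ScaleAxioms C sm) {x : X} (hx : x ∉ C) {c : ℝ} (hc : 0 < c)
    (hc1 : c < 1) : infDist (sm c x) C < infDist x C := by
  have hcx : sm c x ∉ C := fun hmem => hx <| by
    have := hsm.2.2.2.2 _ hmem c⁻¹ (inv_pos.2 hc)
    rwa [hsm.smul_smul (inv_pos.2 hc) hc, inv_mul_cancel₀ hc.ne', hsm.2.1] at this
  have := hsm.2.2.2.1 c⁻¹ ((one_lt_inv₀ hc).2 hc1) _ hcx
  rwa [hsm.smul_smul (inv_pos.2 hc) hc, inv_mul_cancel₀ hc.ne', hsm.2.1] at this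

lemma upClosed_superlevel (hsm : ScaleAxioms C sm) (a : ℝ) :
    UpClosed sm {w | a < infDist w C} :=
  fun x hx _ hl => lt_of_lt_of_le (show a < infDist x C from hx) (hsm.infDist_le x hl)

end ScaleAxioms

/-- The points some contraction of which has distance more than `a` from `C` and more than `e`
from `x`. -/
def outerSet (C : Set S) (sm : ℝ → S → S) (x : S) (a e : ℝ) : Set S :=
  {w | ∃ c : ℝ, 0 < c ∧ c ≤ 1 ∧ a < infDist (sm c w) C ∧ e < dist (sm c w) x}

section outerSet

variable {X : Type*} [MetricSpace X] {C : Set X} {sm : ℝ → X → X}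

lemma upClosed_outerSet (hsm : ScaleAxioms C sm) (x : X) (a e : ℝ) :
    UpClosed sm (outerSet C sm x a e) := by
  rintro w ⟨c, hc, hc1, h1, h2⟩ l hl
  have hl0 : 0 < l := zero_lt_one.trans_le hl
  have heq : sm (c / l) (sm l w) = sm c w := by
    rw [hsm.smul_smul (div_pos hc hl0) hl0, div_mul_cancel₀ _ hl0.ne']
  exact ⟨c / l, div_pos hc hl0, (div_le_self hc.le hl).trans hc1, by rwa [heq], by rwa [heq]⟩

lemma lt_infDist_of_mem_outerSet (hsm : ScaleAxioms C sm) {x w : X} {a e : ℝ}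
    (hw : w ∈ outerSet C sm x a e) : a < infDist w C := by
  obtain ⟨c, hc, hc1, h1, -⟩ := hw
  have := hsm.infDist_mono w hc hc1
  rw [hsm.2.1] at this
  exact h1.trans_le this

lemma isOpen_outerSet (hsm : ScaleAxioms C sm) (x : X) (a e : ℝ) :
    IsOpen (outerSet C sm x a e) := by
  have : outerSet C sm x a e =
      ⋃ c ∈ Ioc (0:ℝ) 1, {w | a < infDist (sm c w) C} ∩ {w | e < dist (sm c w) x} := by
    ext w
    simp only [outerSet, mem_ofPred_eq, mem_iUnion, mem_Ioc, mem_inter_iff, exists_prop, and_assoc]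
  rw [this]
  refine isOpen_biUnion fun c hc => ?_
  have hcont := hsm.continuous hc.1
  exact (isOpen_lt continuous_const ((continuous_infDist_pt C).comp hcont)).inter
    (isOpen_lt continuous_const (hcont.dist continuous_const))

lemma closure_outerSet_subset (hsm : ScaleAxioms C sm) {x : X} {a a' e e' c₀ ρ : ℝ}
    (hc₀ : 0 < c₀) (hρ : ∀ z ∈ ball x ρ, infDist (sm c₀ z) C < a) (ha : a' < a) (he : e' < e)
    (heρ : e' < ρ) : closure (outerSet C sm x a e) ⊆ outerSet C sm x a' e' := by
  intro w hw
  obtain ⟨u, hu, hlim⟩ := mem_closure_iff_seq_limit.1 hw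
  by_cases hwx : e' < dist w x
  · have : a ≤ infDist w C := ge_of_tendsto (((continuous_infDist_pt C).tendsto w).comp hlim)
      (Eventually.of_forall fun n => (lt_infDist_of_mem_outerSet hsm (hu n)).le)
    exact ⟨1, one_pos, le_rfl, by rw [hsm.2.1]; linarith, by rwa [hsm.2.1]⟩
  choose c hc hc1 h1 h2 using hu
  have hball : w ∈ ball x ρ := mem_ball.2 ((not_lt.1 hwx).trans_lt heρ)
  have hmem : ∀ᶠ n in atTop, c n ∈ Icc c₀ 1 := by
    filter_upwards [hlim (isOpen_ball.mem_nhds hball)] with n hn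
    refine ⟨le_of_not_gt fun hlt => ?_, hc1 n⟩
    have := hsm.infDist_mono (u n) (hc n) hlt.le
    linarith [hρ _ hn, h1 n]
  obtain ⟨c₁, hc₁, φ, hφ, hφlim⟩ := isCompact_Icc.tendsto_subseq' hmem.frequently
  have hc₁0 : 0 < c₁ := hc₀.trans_le hc₁.1
  have hsub := hsm.tendsto hc₁0 hφlim (hlim.comp hφ.tendsto_atTop)
  refine ⟨c₁, hc₁0, hc₁.2, ha.trans_le ?_, he.trans_le ?_⟩
  · exact ge_of_tendsto (((continuous_infDist_pt C).tendsto _).comp hsub)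
      (Eventually.of_forall fun n => (h1 (φ n)).le)
  · exact ge_of_tendsto (hsub.dist tendsto_const_nhds)
      (Eventually.of_forall fun n => (h2 (φ n)).le)

end outerSet

lemma countable_pos_of_pairwiseDisjoint {X : Type*} [MeasurableSpace X] {μ : Measure X}
    {K : Set X} (hK : μ K < ⊤)
    {I : Set ℝ} {F : ℝ → Set X} (hF : ∀ s ∈ I, MeasurableSet (F s)) (hFK : ∀ s ∈ I, F s ⊆ K)
    (hd : I.PairwiseDisjoint F) : {s ∈ I | 0 < μ (F s)}.Countable := by
  have := Measure.countable_meas_pos_of_disjoint_of_meas_iUnion_ne_top μ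
    (As := fun s : I => F s) (fun s => hF s s.2)
    (fun ⟨_, hs⟩ ⟨_, ht⟩ hst => hd hs ht fun heq => hst (Subtype.ext heq))
    ((measure_mono (iUnion_subset fun s : I => hFK s s.2)).trans_lt hK).ne
  refine (this.image Subtype.val).mono ?_
  rintro s ⟨hs, hpos⟩
  exact ⟨⟨s, hs⟩, hpos, rfl⟩

lemma exists_mem_Ioo_notMem_of_countable {a b : ℝ} (hab : a < b) {T : Set ℝ}
    (hT : T.Countable) : ∃ s ∈ Ioo a b, s ∉ T := by
  by_contra! hcon
  have hz : volume (Ioo a b) = 0 := (hT.mono hcon).measure_zero volume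
  rw [Real.volume_Ioo, ENNReal.ofReal_eq_zero] at hz
  linarith

lemma frontier_superlevel_subset {X : Type*} [MetricSpace X] (C : Set X) (a : ℝ) :
    frontier {w : X | a < infDist w C} ⊆ {w | infDist w C = a} :=
  fun _ hw => (frontier_lt_subset_eq continuous_const (continuous_infDist_pt C) hw).symm

lemma countable_frontier_superlevel_pos [BorelSpace S] {C : Set S} {μ : Measure S}
    (hμ : MemMO C μ) {a : ℝ} (ha : 0 < a) :
    {s ∈ Ioi (0:ℝ) | 0 < μ (frontier {w | a + s < infDist w C})}.Countable := by
  refine countable_pos_of_pairwiseDisjoint (hμ.2 a ha)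
    (fun s _ => isClosed_frontier.measurableSet) (fun s hs w hw => ?_) ?_
  · have := frontier_superlevel_subset C _ hw
    simp only [mem_ofPred_eq, mem_Ioi] at this hs ⊢
    linarith
  · intro s _ t _ hst
    refine Set.disjoint_left.2 fun w hs ht => hst ?_
    have h1 := frontier_superlevel_subset C _ hs
    have h2 := frontier_superlevel_subset C _ ht
    simp only [mem_ofPred_eq] at h1 h2
    linarith

lemma superlevel_mem_scaleClass [BorelSpace S] {C : Set S} {sm : ℝ → S → S}
    (hsm : ScaleAxioms C sm) {μ : Measure S} {a : ℝ} (ha : 0 < a)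
    (hnull : μ (frontier {w | a < infDist w C}) = 0) :
    {w | a < infDist w C} ∈ scaleClass C sm μ :=
  ⟨(isOpen_lt continuous_const (continuous_infDist_pt C)).measurableSet,
    ⟨a, ha, fun _ hx => le_of_lt hx⟩, hnull, hsm.upClosed_superlevel a⟩

/-- Differences of sets of `scaleClass` contain neighbourhood bases of the points off `C`. -/
lemma exists_sdiff_mem_nhds [BorelSpace S] {C : Set S} {sm : ℝ → S → S}
    (hsm : ScaleAxioms C sm) {μ : Measure S} (hμ : MemMO C μ) {x : S} (hx : x ∉ C)
    {G : Set S} (hG : G ∈ 𝓝 x) :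
    ∃ A ∈ scaleClass C sm μ, ∃ B ∈ scaleClass C sm μ, A \ B ∈ 𝓝 x ∧ A \ B ⊆ G := by
  obtain ⟨ε, hε, hεG⟩ := Metric.mem_nhds_iff.1 hG
  have hhalf : (0:ℝ) < 1 / 2 := by norm_num
  obtain ⟨a₀, ha₀, ha₀x⟩ := exists_between (hsm.infDist_lt hx hhalf (by norm_num))
  obtain ⟨ρ, hρ, hρa, hρε⟩ : ∃ ρ > 0, (∀ z ∈ ball x ρ, infDist (sm (1 / 2) z) C < a₀) ∧ ρ ≤ ε := by
    have hopen : IsOpen {z | infDist (sm (1 / 2) z) C < a₀} :=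
      isOpen_lt ((continuous_infDist_pt C).comp (hsm.continuous hhalf)) continuous_const
    obtain ⟨ρ, hρ, hsub⟩ := Metric.isOpen_iff.1 hopen x ha₀
    exact ⟨min ρ ε, lt_min hρ hε, fun z hz => hsub (ball_subset_ball (min_le_left _ _) hz),
      min_le_right _ _⟩
  obtain ⟨c₂, hc₂, hc₂1, hnear⟩ : ∃ c₂ : ℝ, 0 < c₂ ∧ c₂ < 1 ∧
      ∀ c, c₂ ≤ c → c ≤ 1 → dist (sm c x) x < ρ / 2 := by
    have ht : Tendsto (fun c : ℝ => sm c x) (𝓝 1) (𝓝 x) := by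
      simpa only [hsm.2.1, id] using
        hsm.tendsto one_pos tendsto_id (tendsto_const_nhds (x := x))
    obtain ⟨δ, hδ, hball⟩ := Metric.mem_nhds_iff.1 (ht (ball_mem_nhds x (half_pos hρ)))
    refine ⟨max (1 / 2) (1 - δ / 2), lt_max_of_lt_left hhalf,
      max_lt (by norm_num) (by linarith), fun c h1 h2 => hball ?_⟩
    rw [mem_ball, Real.dist_eq, abs_lt]
    constructor <;> linarith [le_max_right (1 / 2) (1 - δ / 2)]
  obtain ⟨a, haa, hax⟩ := exists_between (max_lt ha₀x (hsm.infDist_lt hx hc₂ hc₂1))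
  have haa₀ : a₀ < a := (le_max_left _ _).trans_lt haa
  have hac₂ : infDist (sm c₂ x) C < a := (le_max_right _ _).trans_lt haa
  have ha : 0 < a := (infDist_nonneg.trans_lt ha₀).trans haa₀
  set e := ρ / 2 with he
  set b := min e (infDist x C - a) with hb
  have hb0 : 0 < b := lt_min (half_pos hρ) (by linarith)
  have hbe : b ≤ e := min_le_left _ _
  have hbx : b ≤ infDist x C - a := min_le_right _ _
  have hclosure : ∀ s' s, 0 ≤ s' → s' < s → s < b →
      closure (outerSet C sm x (a + s) (e + s)) ⊆ outerSet C sm x (a + s') (e + s') :=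
    fun s' s h0 hlt hs => closure_outerSet_subset hsm hhalf
      (fun z hz => (hρa z hz).trans (by linarith)) (by linarith) (by linarith) (by linarith)
  have hcount : {s ∈ Ioo 0 b | 0 < μ (frontier (outerSet C sm x (a + s) (e + s)))}.Countable := by
    refine countable_pos_of_pairwiseDisjoint (hμ.2 a ha)
      (fun s _ => isClosed_frontier.measurableSet) (fun s hs w hw => ?_) ?_
    · have := lt_infDist_of_mem_outerSet hsm
        (hclosure 0 s le_rfl hs.1 hs.2 (frontier_subset_closure hw))
      rw [add_zero] at this
      exact this.le
    · have key : ∀ s ∈ Ioo 0 b, ∀ t ∈ Ioo 0 b, s < t →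
          Disjoint (frontier (outerSet C sm x (a + s) (e + s)))
            (frontier (outerSet C sm x (a + t) (e + t))) := by
        intro s hs t ht hst
        refine Set.disjoint_left.2 fun w hws hwt => ?_
        rw [(isOpen_outerSet hsm x _ _).frontier_eq] at hws
        exact hws.2 (hclosure s t hs.1.le hst ht.2 (frontier_subset_closure hwt))
      intro s hs t ht hst
      rcases hst.lt_or_gt with hlt | hlt
      · exact key s hs t ht hlt
      · exact (key t ht s hs hlt).symm
  obtain ⟨s, hs, hsT⟩ := exists_mem_Ioo_notMem_of_countable hb0
    (hcount.union (countable_frontier_superlevel_pos hμ ha))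
  have hnB : μ (frontier (outerSet C sm x (a + s) (e + s))) = 0 := by
    by_contra hne
    exact hsT (Or.inl ⟨hs, pos_iff_ne_zero.2 hne⟩)
  have hnA : μ (frontier {w | a + s < infDist w C}) = 0 := by
    by_contra hne
    exact hsT (Or.inr ⟨hs.1, pos_iff_ne_zero.2 hne⟩)
  have hs0 : 0 < s := hs.1
  have hsb : s < b := hs.2
  refine ⟨{w | a + s < infDist w C}, superlevel_mem_scaleClass hsm (by linarith) hnA,
    outerSet C sm x (a + s) (e + s), ⟨(isOpen_outerSet hsm x _ _).measurableSet,
      ⟨a, ha, fun w hw => by linarith [lt_infDist_of_mem_outerSet hsm hw]⟩, hnB,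
      upClosed_outerSet hsm x _ _⟩, ?_, ?_⟩
  · have hxB : x ∉ closure (outerSet C sm x (a + s) (e + s)) := by
      intro hmem
      obtain ⟨c, hc, hc1, h1, h2⟩ := hclosure 0 s le_rfl hs0 hsb hmem
      rcases le_total c₂ c with hle | hle
      · linarith [hnear c hle hc1]
      · linarith [hsm.infDist_mono x hc hle]
    have hxA : {w | a + s < infDist w C} ∈ 𝓝 x :=
      (isOpen_lt continuous_const (continuous_infDist_pt C)).mem_nhds
        (show a + s < infDist x C by linarith)
    filter_upwards [hxA, isClosed_closure.isOpen_compl.mem_nhds hxB] with w h1 h2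
    exact ⟨h1, fun hw => h2 (subset_closure hw)⟩
  · rintro w ⟨hwA, hwB⟩
    refine hεG (mem_ball.2 (lt_of_le_of_lt (le_of_not_gt fun hlt => hwB ?_)
      (show e + s < ε by linarith)))
    exact ⟨1, one_pos, le_rfl, by rwa [hsm.2.1], by rwa [hsm.2.1]⟩

/-- If convergence holds on a class stable under intersections, it holds on members of the class
with finitely many differences of members removed. -/
lemma tendsto_measureReal_sdiff_biUnion {X : Type*} [MeasurableSpace X] {𝒜 : Set (Set X)}
    {μ : Measure X}
    {μn : ℕ → Measure X} (hinter : ∀ A ∈ 𝒜, ∀ B ∈ 𝒜, A ∩ B ∈ 𝒜)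
    (hmeas : ∀ A ∈ 𝒜, MeasurableSet A) (hfin : ∀ A ∈ 𝒜, μ A ≠ ⊤)
    (hfinn : ∀ A ∈ 𝒜, ∀ n, μn n A ≠ ⊤)
    (h : ∀ A ∈ 𝒜, Tendsto (fun n => μn n A) atTop (𝓝 (μ A)))
    {A B : ℕ → Set X} (hA : ∀ k, A k ∈ 𝒜) (hB : ∀ k, B k ∈ 𝒜) (N : ℕ) :
    ∀ D ∈ 𝒜, Tendsto (fun n => (μn n).real (D \ ⋃ k < N, A k \ B k)) atTop
      (𝓝 (μ.real (D \ ⋃ k < N, A k \ B k))) := by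
  induction N with
  | zero =>
    intro D hD
    simpa [measureReal_def, Function.comp_def] using
      (ENNReal.tendsto_toReal (hfin D hD)).comp (h D hD)
  | succ N ih =>
    intro D hD
    set E := ⋃ k < N, A k \ B k with hE
    have mE : MeasurableSet E := MeasurableSet.biUnion (to_countable _)
      fun k _ => (hmeas _ (hA k)).diff (hmeas _ (hB k))
    have hDA := hinter _ hD _ (hA N)
    have hDAB := hinter _ hDA _ (hB N)
    have key : ∀ ν : Measure X, ν D ≠ ⊤ → ν.real (D \ ⋃ k < N + 1, A k \ B k) =
        ν.real (D \ E) - ν.real ((D ∩ A N) \ E) + ν.real ((D ∩ A N ∩ B N) \ E) := by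
      intro ν hν
      have hsub : ∀ T ⊆ D, ν T ≠ ⊤ := fun T hT => measure_ne_top_of_subset hT hν
      have e1 : ν.real (D \ E) = ν.real ((D \ E) ∩ A N) + ν.real ((D \ E) \ A N) :=
        (measureReal_inter_add_sdiff (hmeas _ (hA N)) (hsub _ sdiff_subset)).symm
      have e2 : (D \ E) ∩ A N = (D ∩ A N) \ E := by
        ext; simp only [mem_inter_iff, Set.mem_sdiff]; tauto
      have e3 : D \ (⋃ k < N + 1, A k \ B k) = ((D \ E) \ A N) ∪ ((D ∩ A N ∩ B N) \ E) := by
        rw [biUnion_lt_succ]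
        ext; simp only [mem_inter_iff, Set.mem_sdiff, mem_union]; tauto
      have e4 : Disjoint ((D \ E) \ A N) ((D ∩ A N ∩ B N) \ E) :=
        Set.disjoint_left.2 fun w h1 h2 => h1.2 h2.1.1.2
      rw [e3, measureReal_union e4 ((hmeas _ hDAB).diff mE)
        (hsub _ (sdiff_subset.trans sdiff_subset))
        (hsub _ (sdiff_subset.trans (inter_subset_left.trans inter_subset_left))), e1, e2]
      ring
    rw [key μ (hfin D hD)]
    simp_rw [fun n => key (μn n) (hfinn D hD n)]
    exact ((ih D hD).sub (ih _ hDA)).add (ih _ hDAB)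

lemma eventually_lt_integral_of_forall_isOpen_le_liminf [BorelSpace S] {ν : Measure S}
    {νn : ℕ → Measure S} [IsFiniteMeasure ν] [∀ n, IsFiniteMeasure (νn n)] {f : S → ℝ}
    (hf : Continuous f) (hf0 : ∀ x, 0 ≤ f x) {M : ℝ} (hfM : ∀ x, f x ≤ M)
    (hopen : ∀ G, IsOpen G → ν G ≤ atTop.liminf fun n => νn n G) {c : ℝ}
    (hc : c < ∫ x, f x ∂ν) : ∀ᶠ n in atTop, c < ∫ x, f x ∂νn n := by
  have hint : ∀ (ρ : Measure S) [IsFiniteMeasure ρ], Integrable f ρ := fun ρ _ =>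
    Integrable.of_bound hf.measurable.aestronglyMeasurable M
      (Eventually.of_forall fun x => by rw [Real.norm_of_nonneg (hf0 x)]; exact hfM x)
  rcases lt_or_ge c 0 with hneg | hnn
  · exact Eventually.of_forall fun n => hneg.trans_le (integral_nonneg hf0)
  have hle := lintegral_le_liminf_lintegral_of_forall_isOpen_measure_le_liminf_measure
    hf hf0 hopen
  rw [← ofReal_integral_eq_lintegral_ofReal (hint ν) (Eventually.of_forall hf0)] at hle
  have hlt := ((ENNReal.ofReal_lt_ofReal_iff (hnn.trans_lt hc)).2 hc).trans_le hle
  filter_upwards [eventually_lt_of_lt_liminf hlt] with n hn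
  rw [← ofReal_integral_eq_lintegral_ofReal (hint (νn n)) (Eventually.of_forall hf0)] at hn
  exact (ENNReal.ofReal_lt_ofReal_iff_of_nonneg hnn).1 hn

/-- The portmanteau implication from open sets to bounded continuous functions, for finite
measures. -/
lemma tendsto_integral_of_forall_isOpen_le_liminf [BorelSpace S] {ν : Measure S}
    {νn : ℕ → Measure S} [IsFiniteMeasure ν] [∀ n, IsFiniteMeasure (νn n)] {f : S → ℝ}
    (hf : Continuous f) (hf0 : ∀ x, 0 ≤ f x) {M : ℝ} (hfM : ∀ x, f x ≤ M)
    (hopen : ∀ G, IsOpen G → ν G ≤ atTop.liminf fun n => νn n G)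
    (huniv : Tendsto (fun n => (νn n).real univ) atTop (𝓝 (ν.real univ))) :
    Tendsto (fun n => ∫ x, f x ∂νn n) atTop (𝓝 (∫ x, f x ∂ν)) := by
  have hint : ∀ (ρ : Measure S) [IsFiniteMeasure ρ], Integrable f ρ := fun ρ _ =>
    Integrable.of_bound hf.measurable.aestronglyMeasurable M
      (Eventually.of_forall fun x => by rw [Real.norm_of_nonneg (hf0 x)]; exact hfM x)
  have hsub : ∀ (ρ : Measure S) [IsFiniteMeasure ρ],
      ∫ x, (M - f x) ∂ρ = M * ρ.real univ - ∫ x, f x ∂ρ := fun ρ _ => by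
    rw [integral_sub (integrable_const M) (hint ρ), integral_const, smul_eq_mul, mul_comm]
  refine tendsto_order.2 ⟨fun c hc =>
    eventually_lt_integral_of_forall_isOpen_le_liminf hf hf0 hfM hopen hc, fun c hc => ?_⟩
  set δ := (c - ∫ x, f x ∂ν) / 2 with hδ
  have hlow := eventually_lt_integral_of_forall_isOpen_le_liminf (f := fun x => M - f x) (M := M)
    (c := ∫ x, (M - f x) ∂ν - δ) (continuous_const.sub hf) (fun x => sub_nonneg.2 (hfM x))
    (fun x => sub_le_self _ (hf0 x)) hopen (by linarith)
  have hup := (tendsto_order.1 (huniv.const_mul M)).2 (M * ν.real univ + δ) (by linarith)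
  filter_upwards [hlow, hup] with n h1 h2
  rw [hsub, hsub] at h1
  linarith

lemma IsCO.continuous {X : Type*} [MetricSpace X] {C : Set X} {f : X → ℝ}
    (hC : IsClosed C) (hf : IsCO C f) :
    Continuous f := by
  obtain ⟨hcont, -, -, r, hr, hzero⟩ := hf
  refine continuous_iff_continuousAt.2 fun x => ?_
  by_cases hx : x ∈ C
  · have hev : f =ᶠ[𝓝 x] fun _ => 0 := by
      have hopen : IsOpen {z | infDist z C < r} :=
        isOpen_lt (continuous_infDist_pt C) continuous_const
      filter_upwards [hopen.mem_nhds (show infDist x C < r by rwa [infDist_zero_of_mem hx])]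
        with z hz using hzero z hz
    exact continuousAt_const.congr hev.symm
  · exact hcont.continuousAt (hC.isOpen_compl.mem_nhds hx)

lemma measure_inter_le_liminf [BorelSpace S] [SecondCountableTopology S] {C : Set S}
    {sm : ℝ → S → S} (hsm : ScaleAxioms C sm) {μ : Measure S}
    {μn : ℕ → Measure S} (hμ : MemMO C μ) (hμn : ∀ n, MemMO C (μn n))
    (h : ∀ A ∈ scaleClass C sm μ, Tendsto (fun n => μn n A) atTop (𝓝 (μ A)))
    {D G : Set S} (hD : D ∈ scaleClass C sm μ) (hG : IsOpen G) :
    μ (G ∩ D) ≤ atTop.liminf fun n => μn n (G ∩ D) := by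
  rcases (G ∩ D).eq_empty_or_nonempty with hempty | hne
  · simp [hempty]
  choose! A hA B hB hnhds hsubG using fun x (hx : x ∈ G ∩ D) =>
    exists_sdiff_mem_nhds hsm hμ (hD.2.1.subset_compl hx.2) (hG.mem_nhds hx.1)
  obtain ⟨t, ht, htc, hcover⟩ := TopologicalSpace.countable_cover_nhdsWithin
    (s := G ∩ D) (f := fun x => A x \ B x) fun x hx => mem_nhdsWithin_of_mem_nhds (hnhds x hx)
  have htne : t.Nonempty := by
    obtain ⟨x, hx⟩ := hne
    obtain ⟨y, hy, -⟩ := mem_iUnion₂.1 (hcover hx)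
    exact ⟨y, hy⟩
  obtain ⟨x, rfl⟩ := htc.exists_eq_range htne
  have hx : ∀ k, x k ∈ G ∩ D := fun k => ht (mem_range_self k)
  set E : ℕ → Set S := fun N => ⋃ k < N, A (x k) \ B (x k) with hE
  have mE : ∀ N, MeasurableSet (E N) := fun N => MeasurableSet.biUnion (to_countable _)
    fun k _ => (hA _ (hx k)).1.diff (hB _ (hx k)).1
  have hEG : ∀ N, D ∩ E N ⊆ G ∩ D := fun N w hw => by
    obtain ⟨k, -, hk⟩ := mem_iUnion₂.1 hw.2
    exact ⟨hsubG _ (hx k) hk, hw.1⟩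
  have hEmono : Monotone fun N => D ∩ E N := fun M N hMN =>
    inter_subset_inter_right _ (biUnion_subset_biUnion_left fun k hk => lt_of_lt_of_le hk hMN)
  have hEunion : ⋃ N, D ∩ E N = G ∩ D := by
    refine (iUnion_subset hEG).antisymm fun w hw => ?_
    obtain ⟨y, ⟨k, rfl⟩, hk⟩ := mem_iUnion₂.1 (hcover hw)
    exact mem_iUnion.2 ⟨k + 1, hw.2, mem_iUnion₂.2 ⟨k, k.lt_succ_self, hk⟩⟩
  have hfin := fun A hA => (measure_lt_top_of_mem_scaleClass (sm := sm) (μ := μ) (A := A) hμ hA).ne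
  have hfinn := fun A hA n =>
    (measure_lt_top_of_mem_scaleClass (sm := sm) (μ := μ) (A := A) (hμn n) hA).ne
  have hlim : ∀ N, Tendsto (fun n => μn n (D ∩ E N)) atTop (𝓝 (μ (D ∩ E N))) := by
    intro N
    have h1 := tendsto_measureReal_sdiff_biUnion (𝒜 := scaleClass C sm μ)
      (fun A hA B hB => inter_mem_scaleClass hA hB) (fun A hA => hA.1) hfin hfinn h
      (fun k => hA _ (hx k)) (fun k => hB _ (hx k)) N D hD
    have h2 := (ENNReal.tendsto_toReal (hfin D hD)).comp (h D hD)
    have key : ∀ ν : Measure S, ν D ≠ ⊤ →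
        ν (D ∩ E N) = ENNReal.ofReal ((ν D).toReal - ν.real (D \ E N)) := fun ν hν => by
      have := measureReal_inter_add_sdiff (μ := ν) (s := D) (mE N) hν
      rw [← measureReal_def, ← this, add_sub_cancel_right,
        ofReal_measureReal (measure_ne_top_of_subset inter_subset_left hν)]
    rw [key μ (hfin D hD)]
    simp_rw [fun n => key (μn n) (hfinn D hD n)]
    exact ENNReal.tendsto_ofReal (h2.sub h1)
  have hsup := tendsto_measure_iUnion_atTop (μ := μ) hEmono
  rw [hEunion] at hsup
  refine le_of_tendsto' hsup fun N => ?_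
  rw [Function.comp_apply, ← (hlim N).liminf_eq]
  exact liminf_le_liminf (Eventually.of_forall fun n => measure_mono (hEG N))

/-- Convergence determining class: if `μ_n(A) → μ(A)` for every Borel `A ⊆ O` bounded
away from `C` with `μ(∂A) = 0` and `S(A) = A` (where `S(A) = {λx : x ∈ A, λ ≥ 1}`),
then `μ_n → μ` in `M_O`. -/
theorem stmt11 [BorelSpace S] [CompleteSpace S] [TopologicalSpace.SeparableSpace S]
    (C : Set S) (hC : IsClosed C) (sm : ℝ → S → S) (hsm : ScaleAxioms C sm)
    (μ : Measure S) (μn : ℕ → Measure S)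
    (hμ : MemMO C μ) (hμn : ∀ n, MemMO C (μn n))
    (h : ∀ A : Set S, MeasurableSet A → A ⊆ Cᶜ → BddAway C A → μ (frontier A) = 0 →
        {y | ∃ x ∈ A, ∃ l : ℝ, 1 ≤ l ∧ y = sm l x} = A →
        Tendsto (fun n => μn n A) atTop (𝓝 (μ A))) :
    MOTendsto C μn μ := by
  have hclass : ∀ A ∈ scaleClass C sm μ, Tendsto (fun n => μn n A) atTop (𝓝 (μ A)) :=
    fun A hA => h A hA.1 hA.2.1.subset_compl hA.2.1 hA.2.2.1 (hsm.setOf_smul_eq hA.2.2.2)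
  intro f hf
  have hcont := hf.continuous hC
  obtain ⟨-, hf0, ⟨M, hfM⟩, r, hr, hzero⟩ := hf
  obtain ⟨s, hs, hsT⟩ := exists_mem_Ioo_notMem_of_countable (half_pos hr)
    (countable_frontier_superlevel_pos hμ (half_pos hr))
  have hs0 : 0 < s := hs.1
  have hsr : s < r / 2 := hs.2
  have hnull : μ (frontier {w | r / 2 + s < infDist w C}) = 0 := by
    by_contra hne
    exact hsT ⟨hs0, pos_iff_ne_zero.2 hne⟩
  set D := {w | r / 2 + s < infDist w C} with hDdef
  have hD : D ∈ scaleClass C sm μ := superlevel_mem_scaleClass hsm (by linarith) hnull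
  have hres : ∀ ν : Measure S, ∫ x, f x ∂ν = ∫ x in D, f x ∂ν := fun ν =>
    (setIntegral_eq_integral_of_forall_compl_eq_zero fun x hx => hzero x (by
      have : infDist x C ≤ r / 2 + s := not_lt.1 hx
      linarith)).symm
  have hfinite : ∀ ν : Measure S, MemMO C ν → IsFiniteMeasure (ν.restrict D) := fun ν hν =>
    isFiniteMeasure_restrict.2 (measure_lt_top_of_mem_scaleClass hν hD).ne
  have := hfinite μ hμ
  have := fun n => hfinite (μn n) (hμn n)
  have := UniformSpace.secondCountable_of_separable S
  rw [hres μ, funext fun n => hres (μn n)]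
  refine tendsto_integral_of_forall_isOpen_le_liminf hcont hf0 hfM (fun G hG => ?_) ?_
  · simp only [Measure.restrict_apply hG.measurableSet]
    exact measure_inter_le_liminf hsm hμ hμn hclass hD hG
  · simp only [measureReal_def, Measure.restrict_apply_univ]
    exact (ENNReal.tendsto_toReal (measure_lt_top_of_mem_scaleClass hμ hD).ne).comp (hclass D hD)
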